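/- arXiv:2207.13609 — 2 statements merged into one kernel-verified Lean document; each statement's English description precedes it below -/
import Mathlib

section
/- Let ρ ∈ (0,1], θ > 0, and let ν be a one-dimensional Γ-grey measure with parameters ρ, θ. Define the polynomials H₀(x) = 1, H₁(x) = x, H₂(x) = x² - θ^{ρ-1}e^{-θ}/Γ(ρ,θ), H₃(x) = x³ - 3x(1 + (1-ρ)θ^{-1}). Then these four polynomials are pairwise orthogonal in L²(ℝ, ν): for all j ≠ k in {0,1,2,3}, ∫_ℝ H_j(x) H_k(x) dν(x) = 0. -/
open MeasureTheory Real Set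

/-- Upper incomplete gamma function `Γ(ρ, x) = ∫_x^∞ e^{-w} w^{ρ-1} dw`. -/
noncomputable def uGamma (ρ x : ℝ) : ℝ := ∫ w in Set.Ioi x, Real.exp (-w) * w ^ (ρ - 1)

/-- The first four polynomials `H₀, H₁, H₂, H₃` associated to the one-dimensional
Γ-grey measure with parameters `ρ, θ`. -/
noncomputable def greyPoly (ρ θ : ℝ) : Fin 4 → ℝ → ℝ :=
  ![fun _ => 1,
    fun x => x,
    fun x => x ^ 2 - θ ^ (ρ - 1) * Real.exp (-θ) / uGamma ρ θ,
    fun x => x ^ 3 - 3 * x * (1 + (1 - ρ) * θ⁻¹)]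

/-!
The characteristic function of `ν` is even, so `ν` is symmetric; as `H_j` has the parity of `j`,
only the pairs `(0, 2)` and `(1, 3)` remain, and these involve just the second and fourth moments.

The moments are not assumed to exist. The functions `(sin (t x) / t) ^ n` are bounded, and for even
`n` they are nonnegative, dominated by `x ^ n` and converge to it as `t → 0`. Their `ν`-integrals
are combinations of values of the characteristic function, so a Taylor expansion of the latter at
`0` gives their limit, and Fatou's lemma followed by dominated convergence identifies the moment.
The expansion comes from `∂Γ(ρ, x)/∂x = -e^{-x} x^{ρ-1}`: with `g = e^{-θ} θ^{ρ-1} / Γ(ρ, θ)` and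
`M = 1 + (1 - ρ) / θ` it reads `1 - g t² / 2 + g M t⁴ / 8 + o(t⁴)`, whence the second moment is `g`
and the fourth is `3 g M`.
-/

open Filter Topology Asymptotics

section Moments

theorem integrable_and_integral_eq_of_tendsto_of_le {α : Type*} [MeasurableSpace α]
    {μ : Measure α} {f : ℕ → α → ℝ} {F : α → ℝ} {L : ℝ} (hf : ∀ n, Integrable (f n) μ)
    (hf_nonneg : ∀ n, 0 ≤ᵐ[μ] f n) (hf_le : ∀ n, f n ≤ᵐ[μ] F)
    (hf_lim : ∀ᵐ x ∂μ, Tendsto (fun n => f n x) atTop (𝓝 (F x)))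
    (hL : Tendsto (fun n => ∫ x, f n x ∂μ) atTop (𝓝 L)) :
    Integrable F μ ∧ ∫ x, F x ∂μ = L := by
  have hf_norm (n : ℕ) : ∀ᵐ x ∂μ, ‖f n x‖ = f n x := by
    filter_upwards [hf_nonneg n] with x hx using Real.norm_of_nonneg hx
  have lintegral_eq (n : ℕ) : ∫⁻ x, ‖f n x‖ₑ ∂μ = ENNReal.ofReal (∫ x, f n x ∂μ) := by
    rw [← ofReal_integral_norm_eq_lintegral_enorm (hf n), integral_congr_ae (hf_norm n)]
  have fatou : ∫⁻ x, ‖F x‖ₑ ∂μ ≤ ENNReal.ofReal L := calc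
    ∫⁻ x, ‖F x‖ₑ ∂μ = ∫⁻ x, liminf (fun n => ‖f n x‖ₑ) atTop ∂μ :=
      lintegral_congr_ae (by filter_upwards [hf_lim] with x hx using hx.enorm.liminf_eq.symm)
    _ ≤ liminf (fun n => ∫⁻ x, ‖f n x‖ₑ ∂μ) atTop := lintegral_liminf_le' fun n => (hf n).1.enorm
    _ = ENNReal.ofReal L := by simp only [lintegral_eq, (ENNReal.tendsto_ofReal hL).liminf_eq]
  have hF : Integrable F μ :=
    ⟨aestronglyMeasurable_of_tendsto_ae _ (fun n => (hf n).1) hf_lim,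
      fatou.trans_lt ENNReal.ofReal_lt_top⟩
  refine ⟨hF, tendsto_nhds_unique
    (tendsto_integral_of_dominated_convergence F (fun n => (hf n).1) hF ?_ hf_lim) hL⟩
  intro n
  filter_upwards [hf_norm n, hf_le n] with x hx hx' using hx.trans_le hx'

theorem abs_sin_mul_div_le (t x : ℝ) : |sin (t * x) / t| ≤ |x| := by
  rw [abs_div]
  refine div_le_of_le_mul₀ (abs_nonneg t) (abs_nonneg x) ?_
  rw [mul_comm, ← abs_mul]
  exact abs_sin_le_abs

theorem tendsto_sin_mul_div (x : ℝ) :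
    Tendsto (fun t : ℝ => sin (t * x) / t) (𝓝[≠] 0) (𝓝 x) := by
  have hderiv : HasDerivAt (fun t : ℝ => sin (t * x)) x 0 := by
    simpa using ((hasDerivAt_id (0 : ℝ)).mul_const x).sin
  simpa [div_eq_inv_mul] using hasDerivAt_iff_tendsto_slope_zero.1 hderiv

variable {μ : Measure ℝ} [IsFiniteMeasure μ]

theorem integrable_pow_and_integral_pow_eq_of_tendsto_sin_mul_div {n : ℕ} (hn : Even n) {m : ℝ}
    (h : Tendsto (fun t => ∫ x, (sin (t * x) / t) ^ n ∂μ) (𝓝[≠] 0) (𝓝 m)) :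
    Integrable (fun x => x ^ n) μ ∧ ∫ x, x ^ n ∂μ = m := by
  obtain ⟨t, ht⟩ := exists_seq_tendsto (𝓝[≠] (0 : ℝ))
  refine integrable_and_integral_eq_of_tendsto_of_le
    (f := fun k x => (sin (t k * x) / t k) ^ n) (fun k => ?_)
    (fun k => .of_forall fun x => hn.pow_nonneg _) (fun k => .of_forall fun x => ?_)
    (.of_forall fun x => ((tendsto_sin_mul_div x).comp ht).pow n) (h.comp ht)
  · refine Integrable.of_bound (by fun_prop) ((1 / |t k|) ^ n) (.of_forall fun x => ?_)
    rw [norm_pow, norm_div, Real.norm_eq_abs, Real.norm_eq_abs]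
    gcongr
    exact abs_sin_le_one _
  · have := pow_le_pow_left₀ (abs_nonneg _) (abs_sin_mul_div_le (t k) x) n
    rwa [hn.pow_abs, hn.pow_abs] at this

theorem integrable_cos_mul (t : ℝ) : Integrable (fun x => cos (t * x)) μ :=
  .of_bound (by fun_prop) 1 (.of_forall fun _ => abs_cos_le_one _)

theorem re_charFun_eq_integral_cos (t : ℝ) : (charFun μ t).re = ∫ x, cos (t * x) ∂μ := by
  have hexp : Integrable (fun x : ℝ => Complex.exp ((t * x : ℝ) * Complex.I)) μ :=
    .of_bound (by fun_prop) 1 (.of_forall fun x => (Complex.norm_exp_ofReal_mul_I _).le)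
  calc (charFun μ t).re = (∫ x, Complex.exp ((t * x : ℝ) * Complex.I) ∂μ).re := by
        simp only [charFun_apply_real, Complex.ofReal_mul]
    _ = ∫ x, (Complex.exp ((t * x : ℝ) * Complex.I)).re ∂μ := (integral_re hexp).symm
    _ = ∫ x, cos (t * x) ∂μ := by simp only [Complex.exp_ofReal_mul_I_re]

theorem sin_pow_four (x : ℝ) : sin x ^ 4 = (3 - 4 * cos (2 * x) + cos (4 * x)) / 8 := by
  rw [show 4 * x = 2 * (2 * x) by ring, cos_two_mul (2 * x), cos_two_mul x, cos_sq']
  ring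

theorem integral_sin_mul_div_sq (t : ℝ) :
    ∫ x, (sin (t * x) / t) ^ 2 ∂μ = (μ.real univ - (charFun μ (2 * t)).re) / (2 * t ^ 2) := by
  have hcos (x : ℝ) : (sin (t * x) / t) ^ 2 = (1 - cos (2 * t * x)) / (2 * t ^ 2) := by
    rw [div_pow, sin_sq_eq_half_sub, mul_assoc]
    ring
  simp only [hcos]
  rw [integral_div, integral_sub (integrable_const _) (integrable_cos_mul _),
    re_charFun_eq_integral_cos, integral_const, smul_eq_mul, mul_one]

theorem integral_sin_mul_div_pow_four (t : ℝ) :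
    ∫ x, (sin (t * x) / t) ^ 4 ∂μ =
      (3 * μ.real univ - 4 * (charFun μ (2 * t)).re + (charFun μ (4 * t)).re) / (8 * t ^ 4) := by
  have hcos (x : ℝ) : (sin (t * x) / t) ^ 4 =
      (3 - 4 * cos (2 * t * x) + cos (4 * t * x)) / (8 * t ^ 4) := by
    rw [div_pow, sin_pow_four, div_div, mul_assoc, mul_assoc]
  have hcos_two : Integrable (fun x => 4 * cos (2 * t * x)) μ := (integrable_cos_mul _).const_mul 4
  have hsub : Integrable (fun x => 3 - 4 * cos (2 * t * x)) μ := (integrable_const 3).sub hcos_two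
  simp only [hcos]
  rw [integral_div, integral_add hsub (integrable_cos_mul _),
    integral_sub (integrable_const _) hcos_two, integral_const_mul, re_charFun_eq_integral_cos,
    re_charFun_eq_integral_cos, integral_const, smul_eq_mul, mul_comm (3 : ℝ)]

theorem tendsto_comp_mul_div_of_isLittleO_pow {r : ℝ → ℝ} {n : ℕ}
    (hr : r =o[𝓝 0] fun t => t ^ n) (c : ℝ) :
    Tendsto (fun t => r (c * t) / (c * t) ^ n) (𝓝[≠] 0) (𝓝 0) := by
  have hmul : Tendsto (fun t : ℝ => c * t) (𝓝[≠] 0) (𝓝 0) :=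
    ((continuous_const_mul c).tendsto' 0 0 (mul_zero c)).mono_left nhdsWithin_le_nhds
  exact hr.tendsto_div_nhds_zero.comp hmul

theorem integrable_sq_and_integral_sq_eq_of_charFun_isLittleO {m : ℝ}
    (h : (fun t => (charFun μ t).re - (μ.real univ - m * t ^ 2 / 2)) =o[𝓝 0] fun t => t ^ 2) :
    Integrable (fun x => x ^ 2) μ ∧ ∫ x, x ^ 2 ∂μ = m := by
  refine integrable_pow_and_integral_pow_eq_of_tendsto_sin_mul_div even_two ?_
  have hlim := ((tendsto_comp_mul_div_of_isLittleO_pow h 2).const_mul 2).const_sub m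
  rw [mul_zero, sub_zero] at hlim
  refine hlim.congr' ?_
  filter_upwards [self_mem_nhdsWithin] with t (ht : t ≠ 0)
  rw [integral_sin_mul_div_sq]
  field_simp
  ring

theorem integrable_pow_four_and_integral_pow_four_eq_of_charFun_isLittleO {m₂ m₄ : ℝ}
    (h : (fun t => (charFun μ t).re - (μ.real univ - m₂ * t ^ 2 / 2 + m₄ * t ^ 4 / 24))
      =o[𝓝 0] fun t => t ^ 4) :
    Integrable (fun x => x ^ 4) μ ∧ ∫ x, x ^ 4 ∂μ = m₄ := by
  refine integrable_pow_and_integral_pow_eq_of_tendsto_sin_mul_div (by decide) ?_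
  have hlim := (((tendsto_comp_mul_div_of_isLittleO_pow h 4).const_mul 32).sub
    ((tendsto_comp_mul_div_of_isLittleO_pow h 2).const_mul 8)).const_add m₄
  rw [mul_zero, mul_zero, sub_zero, add_zero] at hlim
  refine hlim.congr' ?_
  filter_upwards [self_mem_nhdsWithin] with t (ht : t ≠ 0)
  rw [integral_sin_mul_div_pow_four]
  field_simp
  ring

end Moments

section Symmetry

theorem isNegInvariant_of_charFun_neg {E : Type*} [NormedAddCommGroup E] [InnerProductSpace ℝ E]
    [CompleteSpace E] [SecondCountableTopology E] [MeasurableSpace E] [BorelSpace E]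
    {μ : Measure E} [IsFiniteMeasure μ] (h : ∀ t, charFun μ (-t) = charFun μ t) :
    μ.IsNegInvariant where
  neg_eq_self := by
    have hneg : μ.neg = μ.map ((-1 : ℝ) • ·) := by
      simp only [Measure.neg_def, neg_one_smul]
    rw [hneg]
    refine Measure.ext_of_charFun (funext fun t => ?_)
    rw [charFun_map_smul, neg_one_smul, h]

theorem integral_eq_zero_of_odd {G F : Type*} [AddGroup G] [MeasurableSpace G] [MeasurableNeg G]
    [NormedAddCommGroup F] [NormedSpace ℝ F] {μ : Measure G} [μ.IsNegInvariant] {f : G → F}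
    (hf : f.Odd) : ∫ x, f x ∂μ = 0 := by
  have hself := integral_neg_eq_self f μ
  simp only [hf _, integral_neg] at hself
  have htwo : (2 : ℝ) • ∫ x, f x ∂μ = 0 := by
    rw [two_smul]
    exact eq_neg_iff_add_eq_zero.1 hself.symm
  exact (smul_eq_zero.1 htwo).resolve_left two_ne_zero

end Symmetry

section IncompleteGamma

theorem isLittleO_sub_taylor_two {E : Type*} [NormedAddCommGroup E] [NormedSpace ℝ E]
    {f f' : ℝ → E} {f'' : E} {x₀ : ℝ} {s : Set ℝ} (hs : Convex ℝ s) (hx₀ : x₀ ∈ s)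
    (hf : ∀ x ∈ s, HasDerivWithinAt f (f' x) s x) (hf' : HasDerivWithinAt f' f'' s x₀) :
    (fun x => f x - (f x₀ + (x - x₀) • f' x₀ + ((x - x₀) ^ 2 / 2) • f''))
      =o[𝓝[s] x₀] fun x => (x - x₀) ^ 2 := by
  have hderiv (x : ℝ) (hx : x ∈ s) :
      HasDerivWithinAt (fun x => f x - (f x₀ + (x - x₀) • f' x₀ + ((x - x₀) ^ 2 / 2) • f''))
        (f' x - f' x₀ - (x - x₀) • f'') s x := by
    have hsub : HasDerivWithinAt (fun x => x - x₀) 1 s x := (hasDerivWithinAt_id x s).sub_const x₀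
    refine ((hf x hx).sub (((hsub.smul_const (f' x₀)).const_add (f x₀)).add
      (((hsub.pow 2).div_const 2).smul_const f''))).congr_deriv ?_
    simp [sub_sub]
  have hderiv_isLittleO : (fun x => f' x - f' x₀ - (x - x₀) • f'')
      =o[𝓝[s] x₀] fun x => (x - x₀) ^ 1 := by
    simpa only [pow_one] using hasDerivWithinAt_iff_isLittleO.1 hf'
  simpa using hs.isLittleO_pow_succ_real hx₀ hderiv hderiv_isLittleO

theorem hasDerivAt_integral_Ioi {f : ℝ → ℝ} {a x : ℝ} (hf : IntegrableOn f (Ioi a)) (hax : a < x)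
    (hf_cont : ContinuousOn f (Ioi a)) : HasDerivAt (fun u => ∫ w in Ioi u, f w) (-f x) x := by
  have hinterval : HasDerivAt (fun u => ∫ w in a..u, f w) (f x) x := by
    refine intervalIntegral.integral_hasDerivAt_right ?_
      (hf_cont.stronglyMeasurableAtFilter isOpen_Ioi x hax)
      (hf_cont.continuousAt (Ioi_mem_nhds hax))
    rw [intervalIntegrable_iff_integrableOn_Ioc_of_le hax.le]
    exact hf.mono_set Ioc_subset_Ioi_self
  refine (hinterval.const_sub (∫ w in Ioi a, f w)).congr_of_eventuallyEq ?_
  filter_upwards [lt_mem_nhds hax] with u hu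
  rw [← intervalIntegral.integral_interval_add_Ioi hf (hf.mono_set (Ioi_subset_Ioi hu.le)),
    add_sub_cancel_left]

theorem continuousOn_exp_neg_mul_rpow (s : ℝ) :
    ContinuousOn (fun w : ℝ => exp (-w) * w ^ s) (Ioi 0) :=
  ContinuousOn.mul (by fun_prop)
    (continuousOn_id.rpow_const fun _ hw => Or.inl (ne_of_gt hw))

theorem integrableOn_exp_neg_mul_rpow_Ioi (s : ℝ) {a : ℝ} (ha : 0 < a) :
    IntegrableOn (fun w : ℝ => exp (-w) * w ^ s) (Ioi a) :=
  integrable_of_isBigO_exp_neg one_half_pos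
    ((continuousOn_exp_neg_mul_rpow s).mono (Ici_subset_Ioi.2 ha))
    (Gamma_integrand_isLittleO s).isBigO

theorem hasDerivAt_exp_neg_mul_rpow (s : ℝ) {x : ℝ} (hx : x ≠ 0) :
    HasDerivAt (fun w : ℝ => exp (-w) * w ^ s) (-(exp (-x) * x ^ s * (1 - s * x⁻¹))) x := by
  refine ((hasDerivAt_neg x).exp.mul (hasDerivAt_rpow_const (Or.inl hx))).congr_deriv ?_
  rw [rpow_sub_one hx]
  ring

theorem hasDerivAt_uGamma (ρ : ℝ) {x : ℝ} (hx : 0 < x) :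
    HasDerivAt (uGamma ρ) (-(exp (-x) * x ^ (ρ - 1))) x :=
  hasDerivAt_integral_Ioi (integrableOn_exp_neg_mul_rpow_Ioi (ρ - 1) (half_pos hx))
    (half_lt_self hx)
    ((continuousOn_exp_neg_mul_rpow (ρ - 1)).mono (Ioi_subset_Ioi (half_pos hx).le))

theorem uGamma_sub_taylor_two_isLittleO (ρ : ℝ) {θ : ℝ} (hθ : 0 < θ) :
    (fun x => uGamma ρ x - (uGamma ρ θ - exp (-θ) * θ ^ (ρ - 1) * (x - θ)
      + exp (-θ) * θ ^ (ρ - 1) * (1 + (1 - ρ) * θ⁻¹) * (x - θ) ^ 2 / 2))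
      =o[𝓝 θ] fun x => (x - θ) ^ 2 := by
  have htaylor := isLittleO_sub_taylor_two (convex_Ioi 0) hθ
    (fun x hx => (hasDerivAt_uGamma ρ hx).hasDerivWithinAt)
    (hasDerivAt_exp_neg_mul_rpow (ρ - 1) hθ.ne').neg.hasDerivWithinAt
  rw [nhdsWithin_eq_nhds.2 (Ioi_mem_nhds hθ)] at htaylor
  refine htaylor.congr_left fun x => ?_
  simp only [smul_eq_mul]
  ring

end IncompleteGamma

theorem greyPoly_neg (ρ θ : ℝ) (j : Fin 4) (x : ℝ) :
    greyPoly ρ θ j (-x) = (-1) ^ (j : ℕ) * greyPoly ρ θ j x := by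
  match j with
  | 0 | 1 | 2 => simp [greyPoly]
  | 3 =>
    simp only [greyPoly, Matrix.cons_val, Fin.coe_ofNat_eq_mod, Nat.reduceMod]
    ring

/-- `ν` is a one-dimensional Γ-grey measure with parameters `ρ, θ`, i.e. its characteristic
function is `t ↦ Γ(ρ, θ + t² / 2) / Γ(ρ, θ)`. The range of the parameters and the normalisation
`ν ℝ = 1` are not part of the predicate. -/
def IsGammaGrey (ρ θ : ℝ) (ν : Measure ℝ) : Prop :=
  ∀ t : ℝ, charFun ν t = ((uGamma ρ (θ + t ^ 2 / 2) / uGamma ρ θ : ℝ) : ℂ)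

theorem isGammaGrey_iff_integral_exp {ρ θ : ℝ} {ν : Measure ℝ} :
    IsGammaGrey ρ θ ν ↔ ∀ ξ : ℝ, ∫ x, Complex.exp (Complex.I * ((ξ * x : ℝ) : ℂ)) ∂ν
      = ((uGamma ρ (θ + ξ ^ 2 / 2) / uGamma ρ θ : ℝ) : ℂ) := by
  simp only [IsGammaGrey, charFun_apply_real, Complex.ofReal_mul, mul_comm Complex.I]

namespace IsGammaGrey

variable {ρ θ : ℝ} {ν : Measure ℝ}

theorem isNegInvariant [IsFiniteMeasure ν] (hν : IsGammaGrey ρ θ ν) : ν.IsNegInvariant :=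
  isNegInvariant_of_charFun_neg fun t => by rw [hν, hν, neg_sq]

theorem charFun_sub_taylor_four_isLittleO (hν : IsGammaGrey ρ θ ν) (hθ : 0 < θ) :
    (fun t => (charFun ν t).re
      - (ν.real univ - θ ^ (ρ - 1) * exp (-θ) / uGamma ρ θ * t ^ 2 / 2
        + 3 * (1 + (1 - ρ) * θ⁻¹) * (θ ^ (ρ - 1) * exp (-θ) / uGamma ρ θ) * t ^ 4 / 24))
      =o[𝓝 0] fun t => t ^ 4 := by
  have hmass : ν.real univ = uGamma ρ θ / uGamma ρ θ := by
    simpa [← Complex.ofReal_div] using hν 0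
  have hshift : Tendsto (fun t : ℝ => θ + t ^ 2 / 2) (𝓝 0) (𝓝 θ) :=
    Continuous.tendsto' (by fun_prop) 0 θ (by simp)
  have hsq : (fun t : ℝ => (θ + t ^ 2 / 2 - θ) ^ 2) =O[𝓝 0] fun t => t ^ 4 :=
    ((isBigO_refl (fun t : ℝ => t ^ 4) (𝓝 0)).const_mul_left (1 / 4)).congr_left
      fun t => by ring
  refine ((((uGamma_sub_taylor_two_isLittleO ρ hθ).comp_tendsto hshift).trans_isBigO
    hsq).const_mul_left (uGamma ρ θ)⁻¹).congr_left fun t => ?_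
  rw [hν, hmass, Complex.ofReal_re, Function.comp_apply]
  ring

theorem integrable_sq_and_integral_sq_eq [IsFiniteMeasure ν]
    (hν : IsGammaGrey ρ θ ν) (hθ : 0 < θ) :
    Integrable (fun x => x ^ 2) ν ∧
      ∫ x, x ^ 2 ∂ν = θ ^ (ρ - 1) * exp (-θ) / uGamma ρ θ := by
  have hpow : (fun t : ℝ => t ^ 4) =o[𝓝 0] fun t => t ^ 2 := isLittleO_pow_pow (by norm_num)
  have hquartic := hpow.const_mul_left
    (3 * (1 + (1 - ρ) * θ⁻¹) * (θ ^ (ρ - 1) * exp (-θ) / uGamma ρ θ) / 24)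
  refine integrable_sq_and_integral_sq_eq_of_charFun_isLittleO
    ((((hν.charFun_sub_taylor_four_isLittleO hθ).trans hpow).add hquartic).congr_left fun t => ?_)
  ring

theorem integrable_pow_four_and_integral_pow_four_eq [IsFiniteMeasure ν]
    (hν : IsGammaGrey ρ θ ν) (hθ : 0 < θ) :
    Integrable (fun x => x ^ 4) ν ∧
      ∫ x, x ^ 4 ∂ν = 3 * (1 + (1 - ρ) * θ⁻¹) * (θ ^ (ρ - 1) * exp (-θ) / uGamma ρ θ) :=
  integrable_pow_four_and_integral_pow_four_eq_of_charFun_isLittleO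
    (hν.charFun_sub_taylor_four_isLittleO hθ)

theorem integral_greyPoly_mul_of_odd [IsFiniteMeasure ν] (hν : IsGammaGrey ρ θ ν) {j k : Fin 4}
    (hjk : Odd (j + k : ℕ)) : ∫ x, greyPoly ρ θ j x * greyPoly ρ θ k x ∂ν = 0 := by
  have := hν.isNegInvariant
  refine integral_eq_zero_of_odd fun x => ?_
  rw [greyPoly_neg, greyPoly_neg, mul_mul_mul_comm, ← pow_add, hjk.neg_one_pow, neg_one_mul]

theorem integral_greyPoly_zero_mul_two [IsProbabilityMeasure ν] (hν : IsGammaGrey ρ θ ν)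
    (hθ : 0 < θ) : ∫ x, greyPoly ρ θ 0 x * greyPoly ρ θ 2 x ∂ν = 0 := by
  obtain ⟨hint, hsq⟩ := hν.integrable_sq_and_integral_sq_eq hθ
  simp [greyPoly, integral_sub hint (integrable_const _), hsq]

theorem integral_greyPoly_one_mul_three [IsFiniteMeasure ν] (hν : IsGammaGrey ρ θ ν)
    (hθ : 0 < θ) : ∫ x, greyPoly ρ θ 1 x * greyPoly ρ θ 3 x ∂ν = 0 := by
  obtain ⟨hint_two, hsq⟩ := hν.integrable_sq_and_integral_sq_eq hθ
  obtain ⟨hint_four, hfour⟩ := hν.integrable_pow_four_and_integral_pow_four_eq hθ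
  have hpoly (x : ℝ) : greyPoly ρ θ 1 x * greyPoly ρ θ 3 x
      = x ^ 4 - 3 * (1 + (1 - ρ) * θ⁻¹) * x ^ 2 := by
    simp only [greyPoly, Matrix.cons_val]
    ring
  simp only [hpoly]
  rw [integral_sub hint_four (hint_two.const_mul _), integral_const_mul, hsq, hfour, sub_self]

end IsGammaGrey

theorem stmt_6_general {ρ θ : ℝ} (hθ : 0 < θ) {ν : Measure ℝ} [IsProbabilityMeasure ν]
    (hν : IsGammaGrey ρ θ ν) {j k : Fin 4} (hjk : j ≠ k) :
    ∫ x, greyPoly ρ θ j x * greyPoly ρ θ k x ∂ν = 0 := by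
  wlog hlt : j < k generalizing j k
  · simpa only [mul_comm] using this hjk.symm (hjk.lt_or_gt.resolve_left hlt)
  have hcases : Odd (j + k : ℕ) ∨ j = 0 ∧ k = 2 ∨ j = 1 ∧ k = 3 := by
    revert j k
    decide
  obtain hodd | ⟨rfl, rfl⟩ | ⟨rfl, rfl⟩ := hcases
  · exact hν.integral_greyPoly_mul_of_odd hodd
  · exact hν.integral_greyPoly_zero_mul_two hθ
  · exact hν.integral_greyPoly_one_mul_three hθ

theorem stmt_6 (ρ θ : ℝ) (hρ : ρ ∈ Set.Ioc (0 : ℝ) 1) (hθ : 0 < θ)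
    (ν : Measure ℝ) [IsProbabilityMeasure ν]
    (hchar : ∀ ξ : ℝ, ∫ x, Complex.exp (Complex.I * ((ξ * x : ℝ) : ℂ)) ∂ν
        = ((uGamma ρ (θ + ξ ^ 2 / 2) / uGamma ρ θ : ℝ) : ℂ)) :
    ∀ j k : Fin 4, j ≠ k →
      ∫ x, greyPoly ρ θ j x * greyPoly ρ θ k x ∂ν = 0 :=
  fun _ _ hjk => stmt_6_general hθ (isGammaGrey_iff_integral_exp.2 hchar) hjk
end

section
/- For every n ∈ ℕ, ρ ∈ (0,1) and θ > 0, there exists a probability measure ν on ℝⁿ (Euclidean space with inner product ⟨·,·⟩ and norm ‖·‖) such that ∫_{ℝⁿ} e^{i⟨ξ,x⟩} dν(x) = Γ(ρ, θ + ‖ξ‖²/2)/Γ(ρ,θ) for all ξ ∈ ℝⁿ; namely, the Gaussian variance mixture ν(A) = ∫_1^∞ N(0, s·Iₙ)(A) · l^θ_ρ(s) ds, where N(0, s·Iₙ) is the n-fold product of the centered Gaussian measure on ℝ with variance s, has this characteristic function. -/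
open MeasureTheory Real Set ProbabilityTheory

/-- The tempered Γ-grey density `l^θ_ρ`. -/
noncomputable def lDens (ρ θ y : ℝ) : ℝ :=
  if 1 < y then Real.exp (-θ * y) / (uGamma ρ θ * Real.Gamma (1 - ρ) * y * (y - 1) ^ ρ) else 0

/-- The Gaussian variance mixture `ν(A) = ∫_1^∞ N(0, s Iₙ)(A) l^θ_ρ(s) ds` on `ℝⁿ`:
the mixing measure is Lebesgue measure with density `l^θ_ρ` (which vanishes off `(1,∞)`),
and `N(0, s Iₙ)` is the `n`-fold product of the centered Gaussian with variance `s`. -/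
noncomputable def greyMixture (ρ θ : ℝ) (n : ℕ) : Measure (Fin n → ℝ) :=
  ((volume : Measure ℝ).withDensity fun s => ENNReal.ofReal (lDens ρ θ s)).bind
    fun s => Measure.pi fun _ : Fin n => gaussianReal 0 s.toNNReal

/-!
Two Laplace transforms meet at the kernel `e^{-wy}`. Integrating `(y - 1)^{-ρ} e^{-wy}` over
`y > 1` gives `Γ(1 - ρ) e^{-w} w^{ρ - 1}`, a multiple of the integrand of `Γ(ρ, ·)`; integrating it
over `w > a` gives `e^{-ay} / (y (y - 1)^ρ)`, a multiple of `l^a_ρ`. By Tonelli, the mixing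
density `l^θ_ρ` therefore has Laplace transform `b ↦ Γ(ρ, θ + b) / Γ(ρ, θ)`, and in particular
mass one. Since `N(0, s Iₙ)` has characteristic function `e^{-s ‖ξ‖² / 2}`, the characteristic
function of the mixture is this Laplace transform at `b = ‖ξ‖² / 2`.
-/

section LaplaceTransforms

lemma setLIntegral_Ioi_add_right (f : ℝ → ENNReal) (a c : ℝ) :
    ∫⁻ x in Ioi a, f (x + c) = ∫⁻ x in Ioi (a + c), f x := by
  have h := (measurePreserving_add_right volume c).setLIntegral_comp_preimage_emb
    (measurableEmbedding_addRight c) f (Ioi (a + c))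
  rwa [preimage_add_const_Ioi, add_sub_cancel_right] at h

lemma lintegral_exp_neg_mul_Ioi {y : ℝ} (hy : 0 < y) (a : ℝ) :
    ∫⁻ w in Ioi a, ENNReal.ofReal (exp (-y * w)) = ENNReal.ofReal (exp (-y * a) / y) := by
  have hy' : -y < 0 := neg_neg_of_pos hy
  rw [← ofReal_integral_eq_lintegral_ofReal (integrableOn_exp_mul_Ioi hy' a)
    (ae_of_all _ fun w => (exp_pos _).le), integral_exp_mul_Ioi hy', neg_div_neg_eq]

lemma lintegral_rpow_mul_exp_neg_mul_Ioi {s w : ℝ} (hs : 0 < s) (hw : 0 < w) :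
    ∫⁻ t in Ioi (0 : ℝ), ENNReal.ofReal (t ^ (s - 1) * exp (-(w * t)))
      = ENNReal.ofReal (Gamma s * w ^ (-s)) := by
  have hval := integral_rpow_mul_exp_neg_mul_Ioi hs hw
  have hint : IntegrableOn (fun t : ℝ => t ^ (s - 1) * exp (-(w * t))) (Ioi 0) :=
    .of_integral_ne_zero <| by
      rw [hval]
      exact mul_ne_zero (by positivity) (Gamma_pos_of_pos hs).ne'
  have hnonneg : 0 ≤ᵐ[volume.restrict (Ioi 0)] fun t : ℝ => t ^ (s - 1) * exp (-(w * t)) :=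
    ae_restrict_of_forall_mem measurableSet_Ioi fun t (ht : 0 < t) => by positivity
  rw [← ofReal_integral_eq_lintegral_ofReal hint hnonneg, hval, one_div, inv_rpow hw.le,
    ← rpow_neg hw.le, mul_comm]

lemma lintegral_sub_rpow_mul_exp_neg_mul_Ioi {s w : ℝ} (hs : 0 < s) (hw : 0 < w) (c : ℝ) :
    ∫⁻ y in Ioi c, ENNReal.ofReal ((y - c) ^ (s - 1) * exp (-y * w))
      = ENNReal.ofReal (Gamma s) * ENNReal.ofReal (exp (-(c * w)) * w ^ (-s)) := by
  have hsplit : ∀ t : ℝ, ENNReal.ofReal ((t + c - c) ^ (s - 1) * exp (-(t + c) * w))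
      = ENNReal.ofReal (exp (-(c * w))) *
        ENNReal.ofReal (t ^ (s - 1) * exp (-(w * t))) := fun t => by
    rw [← ENNReal.ofReal_mul (exp_pos _).le, add_sub_cancel_right,
      show -(t + c) * w = -(c * w) + -(w * t) by ring, exp_add]
    ring_nf
  have hshift := setLIntegral_Ioi_add_right
    (fun y => ENNReal.ofReal ((y - c) ^ (s - 1) * exp (-y * w))) 0 c
  rw [zero_add] at hshift
  rw [← hshift]
  simp_rw [hsplit]
  rw [lintegral_const_mul _ (by fun_prop), lintegral_rpow_mul_exp_neg_mul_Ioi hs hw,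
    ENNReal.ofReal_mul (Gamma_pos_of_pos hs).le, ENNReal.ofReal_mul (exp_pos _).le,
    mul_left_comm]

lemma lintegral_exp_div_mul_sub_one_rpow {ρ a : ℝ} (hρ : ρ < 1) (ha : 0 ≤ a) :
    ∫⁻ y in Ioi (1 : ℝ), ENNReal.ofReal (exp (-a * y) / (y * (y - 1) ^ ρ))
      = ENNReal.ofReal (Gamma (1 - ρ)) *
        ∫⁻ w in Ioi a, ENNReal.ofReal (exp (-w) * w ^ (ρ - 1)) := by
  have hinner_w : ∀ y ∈ Ioi (1 : ℝ), ENNReal.ofReal (exp (-a * y) / (y * (y - 1) ^ ρ))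
      = ∫⁻ w in Ioi a, ENNReal.ofReal ((y - 1) ^ (-ρ) * exp (-y * w)) := fun y hy => by
    have hy₁ : 0 < y - 1 := sub_pos.2 hy
    have hpow : 0 ≤ (y - 1) ^ (-ρ) := by positivity
    simp_rw [ENNReal.ofReal_mul hpow]
    rw [lintegral_const_mul _ (by fun_prop), lintegral_exp_neg_mul_Ioi (zero_lt_one.trans hy),
      ← ENNReal.ofReal_mul hpow, rpow_neg hy₁.le]
    ring_nf
  have hinner_y : ∀ w ∈ Ioi a, ∫⁻ y in Ioi (1 : ℝ), ENNReal.ofReal ((y - 1) ^ (-ρ) * exp (-y * w))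
      = ENNReal.ofReal (Gamma (1 - ρ)) * ENNReal.ofReal (exp (-w) * w ^ (ρ - 1)) := fun w hw => by
    have h := lintegral_sub_rpow_mul_exp_neg_mul_Ioi (sub_pos.2 hρ) (ha.trans_lt hw) 1
    rwa [sub_sub_cancel_left, one_mul, neg_sub] at h
  rw [setLIntegral_congr_fun measurableSet_Ioi hinner_w, lintegral_lintegral_swap
    (by unfold Function.uncurry; fun_prop), setLIntegral_congr_fun measurableSet_Ioi hinner_y,
    lintegral_const_mul _ (by fun_prop)]

end LaplaceTransforms

section UpperGamma

lemma uGamma_integrand_pos {ρ a : ℝ} (ha : 0 ≤ a) :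
    ∀ w ∈ Ioi a, 0 < exp (-w) * w ^ (ρ - 1) := fun _ hw =>
  mul_pos (exp_pos _) (rpow_pos_of_pos (ha.trans_lt hw) _)

lemma integrableOn_uGamma_integrand {ρ a : ℝ} (ha : 0 ≤ a) (h : 0 < ρ ∨ 0 < a) :
    IntegrableOn (fun w => exp (-w) * w ^ (ρ - 1)) (Ioi a) := by
  rcases h with hρ | ha_pos
  · exact (GammaIntegral_convergent hρ).mono_set (Ioi_subset_Ioi ha)
  · refine integrable_of_isBigO_exp_neg one_half_pos ?_ (Gamma_integrand_isLittleO _).isBigO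
    exact (by fun_prop : ContinuousOn (fun w : ℝ => exp (-w)) (Ici a)).mul
      (continuousOn_id.rpow_const fun w hw => .inl (ha_pos.trans_le hw).ne')

lemma uGamma_pos {ρ a : ℝ} (ha : 0 ≤ a) (h : 0 < ρ ∨ 0 < a) : 0 < uGamma ρ a := by
  have hpos := uGamma_integrand_pos (ρ := ρ) ha
  have hsupp : Ioi a ⊆ Function.support fun w => exp (-w) * w ^ (ρ - 1) :=
    fun w hw => (hpos w hw).ne'
  rw [uGamma, setIntegral_pos_iff_support_of_nonneg_ae
    (ae_restrict_of_forall_mem measurableSet_Ioi fun w hw => (hpos w hw).le)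
    (integrableOn_uGamma_integrand ha h), inter_eq_right.2 hsupp]
  simp

lemma ofReal_uGamma {ρ a : ℝ} (ha : 0 ≤ a) (h : 0 < ρ ∨ 0 < a) :
    ENNReal.ofReal (uGamma ρ a) = ∫⁻ w in Ioi a, ENNReal.ofReal (exp (-w) * w ^ (ρ - 1)) :=
  ofReal_integral_eq_lintegral_ofReal (integrableOn_uGamma_integrand ha h)
    (ae_restrict_of_forall_mem measurableSet_Ioi fun w hw => (uGamma_integrand_pos ha w hw).le)

end UpperGamma

section GreyMixing

/-- The measure on `ℝ` with Lebesgue density `l^θ_ρ`, by which `greyMixture` weights the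
variances `s`. -/
noncomputable def greyMixing (ρ θ : ℝ) : Measure ℝ :=
  volume.withDensity fun s => ENNReal.ofReal (lDens ρ θ s)

@[fun_prop]
lemma measurable_lDens (ρ θ : ℝ) : Measurable (lDens ρ θ) :=
  Measurable.ite measurableSet_Ioi (by fun_prop) measurable_const

lemma ae_one_lt_greyMixing (ρ θ : ℝ) : ∀ᵐ s ∂greyMixing ρ θ, 1 < s := by
  refine (ae_withDensity_iff (by fun_prop)).2 (ae_of_all _ fun s hs => ?_)
  by_contra hs₁
  simp [lDens, hs₁] at hs

variable {ρ θ b : ℝ}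

lemma ofReal_lDens_mul_exp (hρ : ρ < 1) (hu : 0 < uGamma ρ θ) (b : ℝ) :
    (fun s => ENNReal.ofReal (lDens ρ θ s) * ENNReal.ofReal (exp (-b * s)))
      = (Ioi 1).indicator fun s => ENNReal.ofReal (uGamma ρ θ * Gamma (1 - ρ))⁻¹ *
        ENNReal.ofReal (exp (-(θ + b) * s) / (s * (s - 1) ^ ρ)) := by
  have hΓ : 0 < Gamma (1 - ρ) := Gamma_pos_of_pos (sub_pos.2 hρ)
  ext s
  by_cases hs : 1 < s
  · rw [indicator_of_mem (mem_Ioi.2 hs), ← ENNReal.ofReal_mul' (exp_pos _).le,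
      ← ENNReal.ofReal_mul (by positivity), lDens, if_pos hs,
      show -(θ + b) * s = -θ * s + -b * s by ring, exp_add]
    congr 1
    field_simp
  · rw [indicator_of_notMem (notMem_Ioi.2 (not_lt.1 hs)), lDens, if_neg hs, ENNReal.ofReal_zero,
      zero_mul]

lemma lintegral_exp_neg_mul_greyMixing (hρ : ρ < 1) (hθ : 0 ≤ θ) (h : 0 < ρ ∨ 0 < θ)
    (hb : 0 ≤ b) :
    ∫⁻ s, ENNReal.ofReal (exp (-b * s)) ∂greyMixing ρ θ
      = ENNReal.ofReal (uGamma ρ (θ + b) / uGamma ρ θ) := by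
  have hΓ : 0 < Gamma (1 - ρ) := Gamma_pos_of_pos (sub_pos.2 hρ)
  have hu := uGamma_pos hθ h
  have hθb : 0 ≤ θ + b := add_nonneg hθ hb
  have h' : 0 < ρ ∨ 0 < θ + b := h.imp_right fun hθ_pos => add_pos_of_pos_of_nonneg hθ_pos hb
  calc ∫⁻ s, ENNReal.ofReal (exp (-b * s)) ∂greyMixing ρ θ
      = ∫⁻ s, ENNReal.ofReal (lDens ρ θ s) * ENNReal.ofReal (exp (-b * s)) :=
        lintegral_withDensity_eq_lintegral_mul _ (by fun_prop) (by fun_prop)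
    _ = ENNReal.ofReal (uGamma ρ θ * Gamma (1 - ρ))⁻¹ *
          (ENNReal.ofReal (Gamma (1 - ρ)) * ENNReal.ofReal (uGamma ρ (θ + b))) := by
        rw [ofReal_lDens_mul_exp hρ hu, lintegral_indicator measurableSet_Ioi,
          lintegral_const_mul _ (by fun_prop), lintegral_exp_div_mul_sub_one_rpow hρ hθb,
          ofReal_uGamma hθb h']
    _ = ENNReal.ofReal (uGamma ρ (θ + b) / uGamma ρ θ) := by
        rw [← ENNReal.ofReal_mul hΓ.le, ← ENNReal.ofReal_mul (by positivity)]
        congr 1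
        field_simp

lemma isProbabilityMeasure_greyMixing (hρ : ρ < 1) (hθ : 0 ≤ θ) (h : 0 < ρ ∨ 0 < θ) :
    IsProbabilityMeasure (greyMixing ρ θ) := by
  have hmass := lintegral_exp_neg_mul_greyMixing hρ hθ h le_rfl
  simp only [neg_zero, zero_mul, exp_zero, ENNReal.ofReal_one, lintegral_one, add_zero,
    div_self (uGamma_pos hθ h).ne'] at hmass
  exact ⟨hmass⟩

lemma integral_exp_neg_mul_greyMixing (hρ : ρ < 1) (hθ : 0 ≤ θ) (h : 0 < ρ ∨ 0 < θ)
    (hb : 0 ≤ b) :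
    ∫ s, exp (-b * s) ∂greyMixing ρ θ = uGamma ρ (θ + b) / uGamma ρ θ := by
  have hratio : 0 ≤ uGamma ρ (θ + b) / uGamma ρ θ :=
    div_nonneg (setIntegral_nonneg measurableSet_Ioi fun w hw =>
      (uGamma_integrand_pos (add_nonneg hθ hb) w hw).le) (uGamma_pos hθ h).le
  rw [integral_eq_lintegral_of_nonneg_ae (ae_of_all _ fun s => (exp_pos _).le) (by fun_prop),
    lintegral_exp_neg_mul_greyMixing hρ hθ h hb, ENNReal.toReal_ofReal hratio]

end GreyMixing

section GaussianMixtures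

variable {ι : Type*} [Fintype ι]

lemma measurable_measure_pi {α : Type*} [MeasurableSpace α] {X : ι → Type*}
    [∀ i, MeasurableSpace (X i)] {μ : α → ∀ i, Measure (X i)}
    [∀ a i, IsProbabilityMeasure (μ a i)] (hμ : ∀ i, Measurable fun a => μ a i) :
    Measurable fun a => Measure.pi (μ a) := by
  refine .measure_of_isPiSystem_of_isProbabilityMeasure generateFrom_pi.symm isPiSystem_pi ?_
  rintro _ ⟨s, hs, rfl⟩
  simp_rw [Measure.pi_pi]
  exact Finset.measurable_prod _ fun i _ =>
    (Measure.measurable_coe (hs i (mem_univ i))).comp (hμ i)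

lemma integral_bind {α β E : Type*} [MeasurableSpace α] [MeasurableSpace β]
    [NormedAddCommGroup E] [NormedSpace ℝ E] {m : Measure α} {κ : α → Measure β} {f : β → E}
    (hκ : Measurable κ) (hf : Integrable f (m.bind κ)) :
    ∫ y, f y ∂m.bind κ = ∫ x, ∫ y, f y ∂κ x ∂m := by
  let η : Kernel α β := ⟨κ, hκ⟩
  have hcomp : (η ∘ₖ Kernel.const Unit m) () = m.bind κ := by
    rw [Kernel.comp_apply, Kernel.const_apply]; rfl
  rw [← hcomp] at hf ⊢
  exact Kernel.integral_comp hf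

lemma integral_cexp_sum_pi (μ : ι → Measure ℝ) [∀ i, SigmaFinite (μ i)] (ξ : ι → ℝ) :
    ∫ x, Complex.exp (Complex.I * ((∑ i, ξ i * x i : ℝ) : ℂ)) ∂Measure.pi μ
      = ∏ i, charFun (μ i) (ξ i) := by
  simp_rw [charFun_apply_real, ← integral_fintype_prod_eq_prod, ← Complex.exp_sum,
    ← Finset.sum_mul, mul_comm Complex.I]
  push_cast
  rfl

lemma integral_cexp_sum_pi_gaussianReal (v : NNReal) (ξ : ι → ℝ) :
    ∫ x, Complex.exp (Complex.I * ((∑ i, ξ i * x i : ℝ) : ℂ))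
      ∂(Measure.pi fun _ : ι => gaussianReal 0 v)
      = ((exp (-((∑ i, ξ i * ξ i) / 2) * v) : ℝ) : ℂ) := by
  rw [integral_cexp_sum_pi]
  simp_rw [charFun_gaussianReal, ← Complex.exp_sum]
  push_cast
  rw [neg_mul, div_mul_eq_mul_div, Finset.sum_mul, Finset.sum_div, ← Finset.sum_neg_distrib]
  congr 1
  exact Finset.sum_congr rfl fun i _ => by ring

lemma measurable_pi_gaussianReal :
    Measurable fun s : ℝ => Measure.pi fun _ : ι => gaussianReal 0 s.toNNReal :=
  measurable_measure_pi fun _ =>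
    measurable_gaussianReal.comp (measurable_const.prodMk measurable_real_toNNReal)

lemma isProbabilityMeasure_bind_pi_gaussianReal (m : Measure ℝ) [IsProbabilityMeasure m] :
    IsProbabilityMeasure (m.bind fun s => Measure.pi fun _ : ι => gaussianReal 0 s.toNNReal) :=
  isProbabilityMeasure_bind measurable_pi_gaussianReal.aemeasurable
    (ae_of_all _ fun _ => inferInstance)

lemma integral_cexp_sum_bind_pi_gaussianReal {m : Measure ℝ} [IsProbabilityMeasure m]
    (hm : ∀ᵐ s ∂m, 0 ≤ s) (ξ : ι → ℝ) :
    ∫ x, Complex.exp (Complex.I * ((∑ i, ξ i * x i : ℝ) : ℂ))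
      ∂(m.bind fun s => Measure.pi fun _ : ι => gaussianReal 0 s.toNNReal)
      = ((∫ s, exp (-((∑ i, ξ i * ξ i) / 2) * s) ∂m : ℝ) : ℂ) := by
  have := isProbabilityMeasure_bind_pi_gaussianReal (ι := ι) m
  have hint : Integrable (fun x : ι → ℝ => Complex.exp (Complex.I * ((∑ i, ξ i * x i : ℝ) : ℂ)))
      (m.bind fun s => Measure.pi fun _ : ι => gaussianReal 0 s.toNNReal) :=
    .of_bound (C := 1) (by fun_prop : Measurable _).aestronglyMeasurable (ae_of_all _ fun x => by
      rw [mul_comm, Complex.norm_exp_ofReal_mul_I])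
  rw [integral_bind measurable_pi_gaussianReal hint, ← integral_complex_ofReal]
  refine integral_congr_ae ?_
  filter_upwards [hm] with s hs
  rw [integral_cexp_sum_pi_gaussianReal, coe_toNNReal s hs]

end GaussianMixtures

theorem stmt_7_general (n : ℕ) {ρ θ : ℝ} (hρ : ρ < 1) (hθ : 0 ≤ θ) (h : 0 < ρ ∨ 0 < θ) :
    IsProbabilityMeasure (greyMixture ρ θ n) ∧
      ∀ ξ : Fin n → ℝ,
        ∫ x, Complex.exp (Complex.I * ((∑ i, ξ i * x i : ℝ) : ℂ)) ∂greyMixture ρ θ n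
          = ((uGamma ρ (θ + (∑ i, ξ i * ξ i) / 2) / uGamma ρ θ : ℝ) : ℂ) := by
  have := isProbabilityMeasure_greyMixing hρ hθ h
  have hmix : greyMixture ρ θ n =
      (greyMixing ρ θ).bind fun s => Measure.pi fun _ : Fin n => gaussianReal 0 s.toNNReal := rfl
  have hsupp : ∀ᵐ s ∂greyMixing ρ θ, 0 ≤ s :=
    (ae_one_lt_greyMixing ρ θ).mono fun s hs => zero_le_one.trans hs.le
  rw [hmix]
  refine ⟨isProbabilityMeasure_bind_pi_gaussianReal _, fun ξ => ?_⟩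
  have hξ : 0 ≤ (∑ i, ξ i * ξ i) / 2 :=
    div_nonneg (Finset.sum_nonneg fun i _ => mul_self_nonneg (ξ i)) zero_le_two
  rw [integral_cexp_sum_bind_pi_gaussianReal hsupp, integral_exp_neg_mul_greyMixing hρ hθ h hξ]

theorem stmt_7 (n : ℕ) (ρ θ : ℝ) (hρ : ρ ∈ Set.Ioo (0 : ℝ) 1) (hθ : 0 < θ) :
    ∃ ν : Measure (Fin n → ℝ), IsProbabilityMeasure ν ∧
      ν = greyMixture ρ θ n ∧
      ∀ ξ : Fin n → ℝ,
        ∫ x, Complex.exp (Complex.I * ((∑ i, ξ i * x i : ℝ) : ℂ)) ∂ν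
          = ((uGamma ρ (θ + (∑ i, ξ i * ξ i) / 2) / uGamma ρ θ : ℝ) : ℂ) := by
  obtain ⟨hprob, hchar⟩ := stmt_7_general n hρ.2 hθ.le (.inr hθ)
  exact ⟨greyMixture ρ θ n, hprob, rfl, hchar⟩
end
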